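/- arXiv:2604.23050 — 2 statements merged into one kernel-verified Lean document; each statement's English description precedes it below -/
import Mathlib

section
/- Let f ∈ ℤ[x] be a polynomial of degree d ≥ 2 with positive leading coefficient having at least two distinct roots in an algebraic closure of ℚ, let m ≥ 2 be an integer, and let F(x) = f(x)^m; let n_F be as in the context. Let δ ≥ 2 be an integer such that for all positive integers s > r, every irreducible factor of G_{s,r}(x,y) = s·f(y) − r·f(x) in ℝ[x,y] has total degree at least δ. Then for every ε > 0 there is a constant C, depending only on F and ε, such that S_F(N) ≤ C·N^{1/δ + ε} for all positive integers N. -/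
open Polynomial Filter

/-- `G_{s,r}(x,y) = s·f(y) − r·f(x)`, viewed with real coefficients. -/
noncomputable def Gpoly (f : Polynomial ℤ) (s r : ℤ) : MvPolynomial (Fin 2) ℝ :=
  (s : MvPolynomial (Fin 2) ℝ) * Polynomial.aeval (MvPolynomial.X 1) f -
    (r : MvPolynomial (Fin 2) ℝ) * Polynomial.aeval (MvPolynomial.X 0) f

/-- The gcd sum `S_F(N) = Σ_{a ≤ N} Σ_{n_F < b < a} gcd(F(a),F(b))/F(a)`. -/
noncomputable def SF (F : Polynomial ℤ) (nF : ℤ) (N : ℕ) : ℝ :=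
  ∑ a ∈ Finset.Icc (1 : ℤ) (N : ℤ), ∑ b ∈ Finset.Ioo nF a,
    (Int.gcd (F.eval a) (F.eval b) : ℝ) / ((F.eval a : ℤ) : ℝ)

/-!
Write `F = f ^ m` and let `f b / f a = r / s` in lowest terms. The summand of `(a, b)` is then
`s ^ (-m) ≤ s ^ (-2)`, so everything reduces to counting, for each pair `r < s`, the lattice points
`(a, b)` with `a ≤ N` on the curve `s f(b) = r f(a)`.

Since the `d`-th root of `f` is a linear function up to `O(1 / x)`, such a point lies within
`O(1 / b)` of the line `b + c = θ (a + c)`, where `θ = (r / s) ^ (1 / d)`. The points with `b` in an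
interval `[B, B (1 + O(θ))]` therefore span triangles of area less than `1 / 2`, so they are
collinear, and a line contains at most `d` of them because `G_{s,r}` has no linear factor. As
`O(θ⁻¹ log N)` such intervals cover `[1, N]` and `θ⁻¹ ≤ √(s / r)`, the curve carries
`O(√(s / r) log N)` points. Summing `√(s / r) / s ^ 2` over `r < s ≤ f(N)` costs one more factor
`log N`, and `log N ^ 2` is smaller than any positive power of `N`.
-/

section GrowthEstimates

open Asymptotics

lemma exists_abs_eval_le_mul_pow (P : ℝ[X]) :
    ∃ A : ℝ, 1 ≤ A ∧ ∀ x : ℝ, 1 ≤ x → |P.eval x| ≤ A * x ^ P.natDegree := by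
  have hsum : 0 ≤ ∑ i ∈ Finset.range (P.natDegree + 1), |P.coeff i| :=
    Finset.sum_nonneg fun _ _ => abs_nonneg _
  refine ⟨1 + ∑ i ∈ Finset.range (P.natDegree + 1), |P.coeff i|, by linarith, fun x hx => ?_⟩
  calc |P.eval x| ≤ ∑ i ∈ Finset.range (P.natDegree + 1), |P.coeff i * x ^ i| := by
        rw [eval_eq_sum_range]
        exact Finset.abs_sum_le_sum_abs _ _
    _ ≤ ∑ i ∈ Finset.range (P.natDegree + 1), |P.coeff i| * x ^ P.natDegree := by
        refine Finset.sum_le_sum fun i hi => ?_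
        rw [abs_mul, abs_of_nonneg (by positivity : 0 ≤ x ^ i)]
        gcongr
        exact Finset.mem_range_succ_iff.1 hi
    _ ≤ _ := by
        rw [← Finset.sum_mul]
        gcongr
        linarith

lemma exists_log_eval_le (P : ℝ[X]) :
    ∃ C : ℝ, 0 ≤ C ∧ ∀ x : ℝ, 1 ≤ x → Real.log (P.eval x) ≤ C * (1 + Real.log x) := by
  obtain ⟨A, hA, hPA⟩ := exists_abs_eval_le_mul_pow P
  have hlogA : 0 ≤ Real.log A := Real.log_nonneg hA
  refine ⟨Real.log A + P.natDegree, by positivity, fun x hx => ?_⟩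
  have hlogx : 0 ≤ Real.log x := Real.log_nonneg hx
  rcases eq_or_ne (P.eval x) 0 with h0 | h0
  · rw [h0, Real.log_zero]
    positivity
  calc Real.log (P.eval x) ≤ Real.log (A * x ^ P.natDegree) := by
        rw [← Real.log_abs]
        exact Real.log_le_log (abs_pos.2 h0) (hPA x hx)
    _ = Real.log A + P.natDegree * Real.log x := by
        rw [Real.log_mul (by positivity) (by positivity), Real.log_pow]
    _ ≤ (Real.log A + P.natDegree) * (1 + Real.log x) := by
        have : 0 ≤ Real.log A * Real.log x := by positivity
        linarith [P.natDegree.cast_nonneg (α := ℝ)]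

lemma exists_one_add_log_sq_le_mul_rpow {ε : ℝ} (hε : 0 < ε) :
    ∃ C : ℝ, ∀ x : ℝ, 1 ≤ x → (1 + Real.log x) ^ 2 ≤ C * x ^ ε := by
  refine ⟨(1 + (ε / 2)⁻¹) ^ 2, fun x hx => ?_⟩
  have hx0 : 0 ≤ x := by linarith
  have hlog : 0 ≤ Real.log x := Real.log_nonneg hx
  have hone : 1 ≤ x ^ (ε / 2) := Real.one_le_rpow hx (by positivity)
  have hlin : 1 + Real.log x ≤ (1 + (ε / 2)⁻¹) * x ^ (ε / 2) := by
    have := Real.log_le_rpow_div hx0 (half_pos hε)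
    rw [div_eq_inv_mul] at this
    linarith
  calc (1 + Real.log x) ^ 2 ≤ ((1 + (ε / 2)⁻¹) * x ^ (ε / 2)) ^ 2 := by gcongr
    _ = (1 + (ε / 2)⁻¹) ^ 2 * x ^ ε := by
        rw [mul_pow, ← Real.rpow_mul_natCast hx0]
        norm_num

lemma abs_sub_le_abs_pow_sub_pow_div {K : Type*} [Field K] [LinearOrder K] [IsStrictOrderedRing K]
    {x y w : K} (hx : 0 ≤ x) (hw : 0 < w) (hwy : w ≤ y) (n : ℕ) :
    |x - y| ≤ |x ^ (n + 1) - y ^ (n + 1)| / w ^ n := by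
  have hy : 0 ≤ y := hw.le.trans hwy
  have hterm : y ^ n ≤ ∑ i ∈ Finset.range (n + 1), x ^ i * y ^ (n - i) := by
    simpa using Finset.single_le_sum (f := fun i => x ^ i * y ^ (n - i))
      (fun i _ => by positivity) (Finset.mem_range.2 n.succ_pos)
  have hsum : w ^ n ≤ |∑ i ∈ Finset.range (n + 1), x ^ i * y ^ (n - i)| :=
    (pow_le_pow_left₀ hw.le hwy n).trans (hterm.trans (le_abs_self _))
  rw [le_div_iff₀ (by positivity), ← (Commute.all x y).mul_geom_sum₂ (n + 1), abs_mul]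
  exact mul_le_mul_of_nonneg_left hsum (abs_nonneg _)

lemma eventually_eval_pos {P : ℝ[X]} (hdeg : 0 < P.natDegree) (hlead : 0 < P.leadingCoeff) :
    ∀ᶠ x in atTop, 0 < P.eval x :=
  (P.tendsto_atTop_of_leadingCoeff_nonneg (natDegree_pos_iff_degree_pos.1 hdeg)
    hlead.le).eventually_gt_atTop 0

lemma natDegree_sub_C_mul_X_add_C_pow_le {K : Type*} [Field K] [CharZero K] {P : K[X]} {n : ℕ}
    (hP : P.natDegree = n + 2) :
    (P - C P.leadingCoeff *
      (X + C (P.coeff (n + 1) / ((n + 2) * P.leadingCoeff))) ^ (n + 2)).natDegree ≤ n := by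
  have hlead : P.leadingCoeff ≠ 0 := leadingCoeff_ne_zero.2 (ne_zero_of_natDegree_gt (n := 0)
    (by omega))
  rw [natDegree_le_iff_coeff_eq_zero]
  intro k hk
  rw [coeff_sub, coeff_C_mul, coeff_X_add_C_pow]
  obtain rfl | rfl | hk : k = n + 1 ∨ k = n + 2 ∨ n + 2 < k := by omega
  · have hn : (n : K) + 2 ≠ 0 := by exact_mod_cast (n + 1).succ_ne_zero
    rw [show n + 2 - (n + 1) = 1 by omega, Nat.choose_succ_self_right]
    push_cast
    field_simp
    ring
  · simp [leadingCoeff, hP]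
  · rw [coeff_eq_zero_of_natDegree_lt (by omega), Nat.choose_eq_zero_of_lt hk]
    simp

lemma exists_isBigO_eval_rpow_sub_linear {P : ℝ[X]} (hdeg : 2 ≤ P.natDegree)
    (hlead : 0 < P.leadingCoeff) :
    ∃ α c : ℝ, 0 < α ∧
      (fun x => P.eval x ^ (P.natDegree : ℝ)⁻¹ - α * (x + c)) =O[atTop] fun x => x⁻¹ := by
  obtain ⟨n, hn⟩ : ∃ n, P.natDegree = n + 2 := ⟨P.natDegree - 2, by omega⟩
  have hHdeg := natDegree_sub_C_mul_X_add_C_pow_le hn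
  set c := P.coeff (n + 1) / ((n + 2) * P.leadingCoeff)
  set H : ℝ[X] := P - C P.leadingCoeff * (X + C c) ^ (n + 2) with hH
  set α := P.leadingCoeff ^ (P.natDegree : ℝ)⁻¹ with hα
  have hα0 : 0 < α := Real.rpow_pos_of_pos hlead _
  have hαpow : α ^ (n + 2) = P.leadingCoeff := by
    rw [← hn, hα, Real.rpow_inv_natCast_pow hlead.le (by omega)]
  refine ⟨α, c, hα0, ?_⟩
  have hHbig : H.eval =O[atTop] fun x => x ^ n := by
    simpa using isBigO_atTop_of_degree_le (P := H) (Q := X ^ n)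
      (by simpa using natDegree_le_iff_degree_le.1 hHdeg)
  have hle : ∀ᶠ x in atTop, ‖P.eval x ^ (P.natDegree : ℝ)⁻¹ - α * (x + c)‖ ≤
      ((α / 2) ^ (n + 1))⁻¹ * ‖H.eval x * (x ^ (n + 1))⁻¹‖ := by
    filter_upwards [eventually_eval_pos (by omega) hlead, eventually_gt_atTop 0,
      eventually_ge_atTop (-2 * c)] with x hPx hx hxc
    have hroot := Real.rpow_inv_natCast_pow hPx.le (by omega : P.natDegree ≠ 0)
    have hdiff : (P.eval x ^ (P.natDegree : ℝ)⁻¹) ^ (n + 1 + 1) - (α * (x + c)) ^ (n + 1 + 1) =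
        H.eval x := by
      rw [mul_pow, hαpow, ← hn, hroot, hn, hH]
      simp
    have hhalf : α / 2 * x ≤ α * (x + c) := by
      rw [div_mul_eq_mul_div, mul_div_assoc]
      gcongr
      linarith
    have hkey := abs_sub_le_abs_pow_sub_pow_div (Real.rpow_nonneg hPx.le (P.natDegree : ℝ)⁻¹)
      (by positivity) hhalf (n + 1)
    rw [hdiff, mul_pow, div_eq_mul_inv, mul_inv, mul_left_comm] at hkey
    simpa only [Real.norm_eq_abs, abs_mul, abs_inv, abs_of_pos (pow_pos hx (n + 1))] using hkey
  refine (IsBigO.of_bound _ hle).trans ((hHbig.mul (isBigO_refl _ _)).congr' .rfl ?_)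
  filter_upwards [eventually_gt_atTop 0] with x hx
  rw [pow_succ]
  field_simp

lemma exists_abs_sub_linear_le_of_eval_eq {P : ℝ[X]} (hdeg : 2 ≤ P.natDegree)
    (hlead : 0 < P.leadingCoeff) :
    ∃ c K Y : ℝ, 0 ≤ K ∧ 1 ≤ Y ∧ (∀ x, Y ≤ x → 0 < P.eval x) ∧
      ∀ x y θ : ℝ, Y ≤ y → y ≤ x → 0 ≤ θ → θ ≤ 1 → P.eval y = θ ^ P.natDegree * P.eval x →
        |y + c - θ * (x + c)| ≤ K / y := by
  obtain ⟨α, c, hα, hbig⟩ := exists_isBigO_eval_rpow_sub_linear hdeg hlead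
  obtain ⟨K, hK, hbound⟩ := hbig.exists_nonneg
  obtain ⟨Y, hY⟩ := eventually_atTop.1
    ((hbound.bound.and (eventually_eval_pos (by omega) hlead)).and (eventually_ge_atTop 1))
  refine ⟨c, 2 * K / α, max Y 1, by positivity, le_max_right _ _,
    fun x hx => (hY x (le_of_max_le_left hx)).1.2, ?_⟩
  intro x y θ hYy hyx hθ hθ1 heval
  obtain ⟨⟨hy, -⟩, hy1⟩ := hY y (le_of_max_le_left hYy)
  obtain ⟨⟨hx, hPx⟩, hx1⟩ := hY x (le_of_max_le_left (hYy.trans hyx))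
  rw [heval, Real.mul_rpow (by positivity) hPx.le, Real.pow_rpow_inv_natCast hθ (by omega)] at hy
  set U := P.eval x ^ (P.natDegree : ℝ)⁻¹
  simp only [Real.norm_eq_abs, abs_inv, abs_of_pos (by linarith : 0 < x),
    abs_of_pos (by linarith : 0 < y), ← div_eq_mul_inv] at hx hy
  have hx' : |θ * (U - α * (x + c))| ≤ K / y := by
    rw [abs_mul, abs_of_nonneg hθ]
    calc θ * |U - α * (x + c)| ≤ 1 * (K / x) := by gcongr
      _ ≤ K / y := by
        rw [one_mul]
        gcongr
  have hcomb : α * |y + c - θ * (x + c)| ≤ 2 * K / y :=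
    calc α * |y + c - θ * (x + c)| = |θ * (U - α * (x + c)) - (θ * U - α * (y + c))| := by
          rw [← abs_of_pos hα, ← abs_mul, abs_of_pos hα]
          congr 1
          ring
      _ ≤ K / y + K / y := (abs_sub _ _).trans (add_le_add hx' hy)
      _ = 2 * K / y := by ring
  rw [div_right_comm, le_div_iff₀ hα]
  linarith

end GrowthEstimates

section LatticePoints

/-- Twice the signed area of the triangle with vertices `p`, `q`, `r`. Three lattice points are
collinear exactly when it vanishes. -/
def doubleArea (p q r : ℤ × ℤ) : ℤ :=
  (q.1 - p.1) * (r.2 - p.2) - (r.1 - p.1) * (q.2 - p.2)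

lemma doubleArea_eq_zero_of_near_line {θ κ E L : ℝ} (hθ : 0 < θ) (hEL : 4 * E * L < θ)
    {p q r : ℤ × ℤ} (hp : |(p.2 : ℝ) - (θ * p.1 + κ)| ≤ E) (hq : |(q.2 : ℝ) - (θ * q.1 + κ)| ≤ E)
    (hr : |(r.2 : ℝ) - (θ * r.1 + κ)| ≤ E) (hqp : |(q.2 : ℝ) - p.2| ≤ L)
    (hrp : |(r.2 : ℝ) - p.2| ≤ L) :
    doubleArea p q r = 0 := by
  set εp := (p.2 : ℝ) - (θ * p.1 + κ) with hεp
  set εq := (q.2 : ℝ) - (θ * q.1 + κ) with hεq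
  set εr := (r.2 : ℝ) - (θ * r.1 + κ) with hεr
  have hE : 0 ≤ E := (abs_nonneg _).trans hp
  have harea : θ * (doubleArea p q r : ℝ) = (εp - εq) * (r.2 - p.2) - (εp - εr) * (q.2 - p.2) := by
    rw [doubleArea, hεp, hεq, hεr]
    push_cast
    ring
  have hpq : |εp - εq| ≤ 2 * E := (abs_sub _ _).trans (by linarith)
  have hpr : |εp - εr| ≤ 2 * E := (abs_sub _ _).trans (by linarith)
  have hlt : θ * |(doubleArea p q r : ℝ)| < θ * 1 :=
    calc θ * |(doubleArea p q r : ℝ)| = |θ * (doubleArea p q r : ℝ)| := by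
          rw [abs_mul, abs_of_pos hθ]
      _ ≤ |εp - εq| * |(r.2 : ℝ) - p.2| + |εp - εr| * |(q.2 : ℝ) - p.2| := by
          rw [harea, ← abs_mul, ← abs_mul]
          exact abs_sub _ _
      _ ≤ 2 * E * L + 2 * E * L := by gcongr
      _ < θ * 1 := by linarith
  exact Int.abs_lt_one_iff.1 (by exact_mod_cast lt_of_mul_lt_mul_left hlt hθ.le)

lemma exp_le_and_le_of_floor_mul_log_eq {M x : ℝ} {k : ℕ} (hM : 1 ≤ M) (hx : 1 ≤ x)
    (hk : ⌊M * Real.log x⌋₊ = k) :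
    Real.exp (k / M) ≤ x ∧ x ≤ Real.exp (k / M) * (1 + 2 / M) := by
  have hM0 : 0 < M := by linarith
  have hx0 : 0 < x := by linarith
  obtain ⟨hlow, hupp⟩ := (Nat.floor_eq_iff (mul_nonneg hM0.le (Real.log_nonneg hx))).1 hk
  have hexp : Real.exp (1 / M) ≤ 1 + 2 / M := by
    have habs : |1 / M| = 1 / M := abs_of_pos (by positivity)
    have := Real.abs_exp_sub_one_le (x := 1 / M) (by rw [habs, div_le_one hM0]; exact hM)
    rw [habs, mul_one_div] at this
    linarith [le_abs_self (Real.exp (1 / M) - 1)]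
  constructor
  · rw [← Real.le_log_iff_exp_le hx0, div_le_iff₀' hM0]
    exact hlow
  · calc x ≤ Real.exp (k / M + 1 / M) := by
          rw [← Real.log_le_iff_le_exp hx0, ← add_div, le_div_iff₀' hM0]
          exact hupp.le
      _ ≤ Real.exp (k / M) * (1 + 2 / M) := by
          rw [Real.exp_add]
          gcongr

lemma doubleArea_eq_zero_of_floor_mul_log_eq {θ κ K M : ℝ} (hθ : 0 < θ) (hM : 1 ≤ M)
    (hKM : 8 * K < θ * M) {P : Finset (ℤ × ℤ)}
    (hone : ∀ p ∈ P, 1 ≤ p.2) (hnear : ∀ p ∈ P, |(p.2 : ℝ) - (θ * p.1 + κ)| ≤ K / p.2) {k : ℕ}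
    (hcell : ∀ p ∈ P, ⌊M * Real.log p.2⌋₊ = k) :
    ∀ p ∈ P, ∀ q ∈ P, ∀ r ∈ P, doubleArea p q r = 0 := by
  have hM0 : 0 < M := by linarith
  set b := Real.exp (k / M)
  have hb0 : 0 < b := Real.exp_pos _
  have hbounds : ∀ p ∈ P, b ≤ p.2 ∧ (p.2 : ℝ) ≤ b * (1 + 2 / M) := fun p hp =>
    exp_le_and_le_of_floor_mul_log_eq hM (by exact_mod_cast hone p hp) (hcell p hp)
  have hnear' : ∀ p ∈ P, |(p.2 : ℝ) - (θ * p.1 + κ)| ≤ K / b := by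
    intro p hp
    have hbp := (hbounds p hp).1
    have hK : 0 ≤ K := by
      by_contra! hK
      exact absurd ((abs_nonneg _).trans (hnear p hp))
        (not_le.2 (div_neg_of_neg_of_pos hK (hb0.trans_le hbp)))
    exact (hnear p hp).trans (by gcongr)
  have hclose : ∀ p ∈ P, ∀ q ∈ P, |(q.2 : ℝ) - p.2| ≤ b * (2 / M) := by
    intro p hp q hq
    obtain ⟨hp_low, hp_upp⟩ := hbounds p hp
    obtain ⟨hq_low, hq_upp⟩ := hbounds q hq
    rw [mul_add, mul_one] at hp_upp hq_upp
    exact abs_le.2 ⟨by linarith, by linarith⟩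
  intro p hp q hq r hr
  refine doubleArea_eq_zero_of_near_line hθ ?_ (hnear' p hp) (hnear' q hq) (hnear' r hr)
    (hclose p hp q hq) (hclose p hp r hr)
  calc 4 * (K / b) * (b * (2 / M)) = 8 * K / M := by
        field_simp
        ring
    _ < θ := by rwa [div_lt_iff₀ hM0]

lemma card_le_of_near_line {P : Finset (ℤ × ℤ)} {d : ℕ} {N θ κ K : ℝ} (hN : 1 ≤ N) (hK : 0 ≤ K)
    (hθ : 0 < θ) (hmem : ∀ p ∈ P, 1 ≤ p.2 ∧ (p.2 : ℝ) ≤ N)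
    (hnear : ∀ p ∈ P, |(p.2 : ℝ) - (θ * p.1 + κ)| ≤ K / p.2)
    (hcollinear : ∀ Q ⊆ P, (∀ p ∈ Q, ∀ q ∈ Q, ∀ r ∈ Q, doubleArea p q r = 0) → Q.card ≤ d) :
    (P.card : ℝ) ≤ d * ((8 * K / θ + 1) * Real.log N + 1) := by
  set M : ℝ := 8 * K / θ + 1 with hM
  have hM1 : 1 ≤ M := le_add_of_nonneg_left (by positivity)
  have hKM : 8 * K < θ * M := by
    rw [hM, mul_add, mul_div_cancel₀ _ hθ.ne']
    linarith
  let cell : ℤ × ℤ → ℕ := fun p => ⌊M * Real.log p.2⌋₊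
  have hcell : ∀ p ∈ P, cell p ∈ Finset.range (⌊M * Real.log N⌋₊ + 1) := by
    intro p hp
    have hp1 : (1 : ℝ) ≤ p.2 := by exact_mod_cast (hmem p hp).1
    have hpN := (hmem p hp).2
    exact Finset.mem_range_succ_iff.2 (Nat.floor_le_floor (by gcongr))
  have hfiber : ∀ k ∈ Finset.range (⌊M * Real.log N⌋₊ + 1),
      (P.filter fun p => cell p = k).card ≤ d := by
    intro k _
    have hsub := Finset.filter_subset (fun p => cell p = k) P
    exact hcollinear _ hsub (doubleArea_eq_zero_of_floor_mul_log_eq hθ hM1 hKM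
      (fun p hp => (hmem p (hsub hp)).1) (fun p hp => hnear p (hsub hp))
      fun p hp => (Finset.mem_filter.1 hp).2)
  calc (P.card : ℝ) ≤ d * (⌊M * Real.log N⌋₊ + 1) := by
        exact_mod_cast (Finset.card_le_mul_card_image_of_maps_to hcell d hfiber).trans_eq
          (by rw [Finset.card_range])
    _ ≤ d * (M * Real.log N + 1) := by
        have := Real.log_nonneg hN
        gcongr
        exact Nat.floor_le (by positivity)

lemma exists_line_of_doubleArea_eq_zero {Q : Finset (ℤ × ℤ)}
    (hinj : Set.InjOn Prod.fst (Q : Set (ℤ × ℤ)))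
    (harea : ∀ p ∈ Q, ∀ q ∈ Q, ∀ r ∈ Q, doubleArea p q r = 0) :
    ∃ θ κ : ℝ, ∀ p ∈ Q, θ * p.1 + κ = p.2 := by
  rcases (Q : Set (ℤ × ℤ)).subsingleton_or_nontrivial with hsub | ⟨p, hp, q, hq, hpq⟩
  · rcases Q.eq_empty_or_nonempty with rfl | ⟨p, hp⟩
    · simp
    · refine ⟨0, p.2, fun z hz => ?_⟩
      rw [hsub hz hp, zero_mul, zero_add]
  · have hne : (q.1 : ℝ) - p.1 ≠ 0 :=
      sub_ne_zero.2 (Int.cast_injective.ne (hinj.ne hq hp hpq.symm))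
    refine ⟨(q.2 - p.2) / (q.1 - p.1), p.2 - (q.2 - p.2) / (q.1 - p.1) * p.1, fun z hz => ?_⟩
    have hz : ((q.1 : ℝ) - p.1) * (z.2 - p.2) - (z.1 - p.1) * (q.2 - p.2) = 0 := by
      exact_mod_cast harea p hp q hq z hz
    field_simp
    linarith

lemma card_le_of_doubleArea_eq_zero {p q : ℝ[X]} {n : ℕ} (hp : p.natDegree ≤ n)
    (hq : q.natDegree ≤ n) (hline : ∀ θ κ : ℝ, p.comp (C θ * X + C κ) ≠ q)
    {Q : Finset (ℤ × ℤ)} (hcurve : ∀ z ∈ Q, p.eval (z.2 : ℝ) = q.eval (z.1 : ℝ))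
    (hinj : Set.InjOn Prod.fst (Q : Set (ℤ × ℤ)))
    (harea : ∀ x ∈ Q, ∀ y ∈ Q, ∀ z ∈ Q, doubleArea x y z = 0) :
    Q.card ≤ n := by
  obtain ⟨θ, κ, hθκ⟩ := exists_line_of_doubleArea_eq_zero hinj harea
  set D := p.comp (C θ * X + C κ) - q with hD
  have hD0 : D ≠ 0 := sub_ne_zero.2 (hline θ κ)
  have hDdeg : D.natDegree ≤ n := by
    refine (natDegree_sub_le _ _).trans (max_le (natDegree_comp_le.trans ?_) hq)
    exact (Nat.mul_le_mul hp natDegree_linear_le).trans_eq (mul_one n)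
  have hroot : ∀ z ∈ Q, (z.1 : ℝ) ∈ D.roots.toFinset := by
    intro z hz
    rw [Multiset.mem_toFinset, mem_roots hD0, IsRoot.def, hD, eval_sub, eval_comp, sub_eq_zero]
    simpa [hθκ z hz] using hcurve z hz
  calc Q.card ≤ D.roots.toFinset.card :=
        Finset.card_le_card_of_injOn (fun z => (z.1 : ℝ)) hroot
          fun x hx y hy hxy => hinj hx hy (Int.cast_injective hxy)
    _ ≤ Multiset.card D.roots := Multiset.toFinset_card_le _
    _ ≤ n := D.card_roots'.trans hDdeg

end LatticePoints

section LinearFactors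

lemma irreducible_X_sub_linear {K : Type*} [Field K] (θ κ : K) :
    Irreducible (MvPolynomial.X 1 - (MvPolynomial.C θ * MvPolynomial.X 0 + MvPolynomial.C κ) :
      MvPolynomial (Fin 2) K) := by
  set A : MvPolynomial (Fin 2) K := MvPolynomial.C θ * MvPolynomial.X 0 + MvPolynomial.C κ
  have hvars : A.vars ⊆ {0} :=
    (MvPolynomial.vars_add_subset _ _).trans <| Finset.union_subset
      ((MvPolynomial.vars_mul _ _).trans (by simp)) (by simp)
  simpa [sub_eq_add_neg] using MvPolynomial.irreducible_mul_X_add (R := K) 1 (-A) 1 one_ne_zero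
    (by simp) (fun h => one_ne_zero (Finset.mem_singleton.1 (hvars (MvPolynomial.vars_neg A ▸ h))))
    isRelPrime_one_left

lemma X_sub_linear_dvd_Gpoly {f : ℤ[X]} {s r : ℤ} {θ κ : ℝ}
    (h : (C (s : ℝ) * f.map (Int.castRingHom ℝ)).comp (C θ * X + C κ) =
      C (r : ℝ) * f.map (Int.castRingHom ℝ)) :
    MvPolynomial.X 1 - (MvPolynomial.C θ * MvPolynomial.X 0 + MvPolynomial.C κ) ∣ Gpoly f s r := by
  set A : MvPolynomial (Fin 2) ℝ :=
    MvPolynomial.C θ * MvPolynomial.X 0 + MvPolynomial.C κ with hA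
  have hsubst : (s : MvPolynomial (Fin 2) ℝ) * aeval A f =
      (r : MvPolynomial (Fin 2) ℝ) * aeval (MvPolynomial.X 0) f := by
    have := congrArg (aeval (MvPolynomial.X 0 : MvPolynomial (Fin 2) ℝ)) h
    simpa [aeval_comp, ← algebraMap_int_eq, aeval_map_algebraMap, MvPolynomial.algebraMap_eq,
      ← hA] using this
  have hdvd : MvPolynomial.X 1 - A ∣ aeval (MvPolynomial.X 1) f - aeval A f := by
    simpa [eval_map_algebraMap] using sub_dvd_eval_sub (MvPolynomial.X 1) A
      (f.map (algebraMap ℤ (MvPolynomial (Fin 2) ℝ)))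
  rw [Gpoly, ← hsubst, ← mul_sub]
  exact hdvd.mul_left _

lemma comp_linear_ne_of_two_le_totalDegree {f : ℤ[X]} {s r : ℤ}
    (hfactor : ∀ g : MvPolynomial (Fin 2) ℝ, Irreducible g → g ∣ Gpoly f s r → 2 ≤ g.totalDegree)
    (θ κ : ℝ) :
    (C (s : ℝ) * f.map (Int.castRingHom ℝ)).comp (C θ * X + C κ) ≠
      C (r : ℝ) * f.map (Int.castRingHom ℝ) := by
  intro h
  have htwo := hfactor _ (irreducible_X_sub_linear θ κ) (X_sub_linear_dvd_Gpoly h)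
  have hone : (MvPolynomial.X 1 - (MvPolynomial.C θ * MvPolynomial.X 0 + MvPolynomial.C κ) :
      MvPolynomial (Fin 2) ℝ).totalDegree ≤ 1 := by
    refine (MvPolynomial.totalDegree_sub _ _).trans (max_le (by simp) ?_)
    refine (MvPolynomial.totalDegree_add _ _).trans (max_le ?_ (by simp))
    exact (MvPolynomial.totalDegree_mul _ _).trans (by simp)
  omega

end LinearFactors

section ProportionalPairs

/-- The pairs `(a, b)` of integers with `n < b < a` and `1 ≤ a ≤ N`: the index set of the double
sum `SF`. -/
noncomputable def orderedPairs (n : ℤ) (N : ℕ) : Finset (ℤ × ℤ) :=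
  {p ∈ Finset.Icc (1 : ℤ) N ×ˢ Finset.Ioo n N | p.2 < p.1}

/-- The pairs `(a, b)` in `orderedPairs n N` with `u b / u a = r / s`, written without division. For
`u = |f|` these are the lattice points of the curve `G_{s,r} = 0` in the range of summation. -/
noncomputable def proportionalPairs (u : ℤ → ℕ) (n : ℤ) (N s r : ℕ) : Finset (ℤ × ℤ) :=
  {p ∈ orderedPairs n N | s * u p.2 = r * u p.1}

variable {u : ℤ → ℕ} {n : ℤ} {N s r : ℕ}

lemma mem_orderedPairs {p : ℤ × ℤ} :
    p ∈ orderedPairs n N ↔ p.1 ∈ Finset.Icc (1 : ℤ) N ∧ p.2 ∈ Finset.Ioo n p.1 := by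
  simp only [orderedPairs, Finset.mem_filter, Finset.mem_product, Finset.mem_Icc, Finset.mem_Ioo]
  omega

lemma lt_and_lt_and_le_of_mem_orderedPairs {p : ℤ × ℤ} (hp : p ∈ orderedPairs n N) :
    n < p.2 ∧ p.2 < p.1 ∧ p.1 ≤ N := by
  simp only [mem_orderedPairs, Finset.mem_Icc, Finset.mem_Ioo] at hp
  omega

lemma injOn_fst_proportionalPairs (hu : Set.InjOn u (Set.Ioi n)) (hs : 0 < s) :
    Set.InjOn Prod.fst (proportionalPairs u n N s r : Set (ℤ × ℤ)) := by
  intro p hp q hq hpq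
  obtain ⟨hp, hpu⟩ := Finset.mem_filter.1 hp
  obtain ⟨hq, hqu⟩ := Finset.mem_filter.1 hq
  rw [hpq, ← hqu] at hpu
  exact Prod.ext hpq (hu (lt_and_lt_and_le_of_mem_orderedPairs hp).1
    (lt_and_lt_and_le_of_mem_orderedPairs hq).1 (Nat.eq_of_mul_eq_mul_left hs hpu))

lemma injOn_snd_proportionalPairs (hu : Set.InjOn u (Set.Ioi n)) (hr : 0 < r) :
    Set.InjOn Prod.snd (proportionalPairs u n N s r : Set (ℤ × ℤ)) := by
  intro p hp q hq hpq
  obtain ⟨hp, hpu⟩ := Finset.mem_filter.1 hp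
  obtain ⟨hq, hqu⟩ := Finset.mem_filter.1 hq
  rw [hpq, hqu] at hpu
  obtain ⟨hp2, hp1, -⟩ := lt_and_lt_and_le_of_mem_orderedPairs hp
  obtain ⟨hq2, hq1, -⟩ := lt_and_lt_and_le_of_mem_orderedPairs hq
  exact Prod.ext (hu (hp2.trans hp1) (hq2.trans hq1) (Nat.eq_of_mul_eq_mul_left hr hpu.symm)) hpq

lemma card_filter_not_le_snd_le {P : Finset (ℤ × ℤ)}
    (hinj : Set.InjOn Prod.snd (P : Set (ℤ × ℤ))) (hpos : ∀ p ∈ P, 0 < p.2) {Y : ℝ} (hY : 0 ≤ Y) :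
    (({p ∈ P | ¬ Y ≤ (p.2 : ℝ)} : Finset (ℤ × ℤ)).card : ℝ) ≤ Y := by
  have hmaps : ∀ p ∈ ({p ∈ P | ¬ Y ≤ (p.2 : ℝ)} : Finset (ℤ × ℤ)), p.2 ∈ Finset.Ioc 0 ⌊Y⌋ := by
    intro p hp
    obtain ⟨hp, hpY⟩ := Finset.mem_filter.1 hp
    exact Finset.mem_Ioc.2 ⟨hpos p hp, Int.le_floor.2 (not_le.1 hpY).le⟩
  have hcard := Finset.card_le_card_of_injOn Prod.snd hmaps
    (hinj.mono (by exact_mod_cast Finset.filter_subset _ P))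
  rw [Int.card_Ioc, sub_zero, Int.floor_toNat] at hcard
  exact (Nat.cast_le.2 hcard).trans (Nat.floor_le hY)

lemma inv_rpow_inv_natCast_le_sqrt {t : ℝ} (ht : 0 < t) (ht1 : t ≤ 1) {d : ℕ} (hd : 2 ≤ d) :
    (t ^ (d : ℝ)⁻¹)⁻¹ ≤ √t⁻¹ := by
  rw [← Real.inv_rpow ht.le, Real.sqrt_eq_rpow, one_div]
  exact Real.rpow_le_rpow_of_exponent_le (one_le_inv_iff₀.2 ⟨ht, ht1⟩)
    (inv_anti₀ two_pos (by exact_mod_cast hd))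

lemma exists_card_le_of_mul_eval_eq {P : ℝ[X]} (hdeg : 2 ≤ P.natDegree)
    (hlead : 0 < P.leadingCoeff) :
    ∃ K Y : ℝ, 0 ≤ K ∧ 1 ≤ Y ∧ (∀ x, Y ≤ x → 0 < P.eval x) ∧
      ∀ s r N : ℝ, 1 ≤ N → 0 < r → r < s →
        (∀ θ κ : ℝ, (C s * P).comp (C θ * X + C κ) ≠ C r * P) →
        ∀ S : Finset (ℤ × ℤ), Set.InjOn Prod.fst (S : Set (ℤ × ℤ)) →
          (∀ p ∈ S, Y ≤ p.2 ∧ p.2 < p.1 ∧ p.1 ≤ N ∧ s * P.eval (p.2 : ℝ) = r * P.eval (p.1 : ℝ)) →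
          (S.card : ℝ) ≤ K * ((1 + Real.log N) * √(s / r)) := by
  obtain ⟨c, K, Y, hK, hY, hpos, hnear⟩ := exists_abs_sub_linear_le_of_eval_eq hdeg hlead
  refine ⟨P.natDegree * (8 * K + 1), Y, by positivity, hY, hpos, ?_⟩
  intro s r N hN hr hrs hline S hinj hS
  have hs : 0 < s := hr.trans hrs
  have hrs1 : r / s ≤ 1 := (div_le_one hs).2 hrs.le
  set θ := (r / s) ^ (P.natDegree : ℝ)⁻¹
  have hθ : 0 < θ := Real.rpow_pos_of_pos (by positivity) _
  have hθ1 : θ ≤ 1 := Real.rpow_le_one (by positivity) hrs1 (by positivity)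
  have hθpow : θ ^ P.natDegree = r / s := Real.rpow_inv_natCast_pow (by positivity) (by omega)
  have hθinv : θ⁻¹ ≤ √(s / r) := by
    simpa only [inv_div] using inv_rpow_inv_natCast_le_sqrt (by positivity) hrs1 hdeg
  have hcount : (S.card : ℝ) ≤ P.natDegree * ((8 * K / θ + 1) * Real.log N + 1) := by
    refine card_le_of_near_line (κ := θ * c - c) hN hK hθ (fun p hp => ?_) (fun p hp => ?_)
      (fun Q hQ harea => ?_)
    · obtain ⟨hpY, hlt, hpN, -⟩ := hS p hp
      have hlt : (p.2 : ℝ) < p.1 := by exact_mod_cast hlt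
      exact ⟨by exact_mod_cast hY.trans hpY, by linarith⟩
    · obtain ⟨hpY, hlt, -, heq⟩ := hS p hp
      have := hnear p.1 p.2 θ hpY (by exact_mod_cast hlt.le) hθ.le hθ1
        (by rw [hθpow]; field_simp; linarith)
      convert this using 2
      ring
    · exact card_le_of_doubleArea_eq_zero (natDegree_C_mul_le s P) (natDegree_C_mul_le r P) hline
        (fun p hp => by simpa using (hS p (hQ hp)).2.2.2)
        (hinj.mono (by exact_mod_cast hQ)) harea
  have hlog : 0 ≤ Real.log N := Real.log_nonneg hN
  have hR : 1 ≤ √(s / r) := Real.one_le_sqrt.2 ((one_le_div hr).2 hrs.le)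
  calc (S.card : ℝ) ≤ P.natDegree * (8 * K * (Real.log N * θ⁻¹) + (1 + Real.log N)) :=
        hcount.trans_eq (by ring)
    _ ≤ P.natDegree * (8 * K * ((1 + Real.log N) * √(s / r)) + (1 + Real.log N) * √(s / r)) := by
        gcongr
        · linarith
        · exact le_mul_of_one_le_right (by linarith) hR
    _ = _ := by ring

lemma eval_map_intCastRingHom (f : ℤ[X]) (a : ℤ) :
    (f.map (Int.castRingHom ℝ)).eval (a : ℝ) = f.eval a := by
  simp [eval_intCast_map]

lemma mul_abs_eval_eq_of_mem_proportionalPairs {f : ℤ[X]} {p : ℤ × ℤ}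
    (hp : p ∈ proportionalPairs (fun a => (f.eval a).natAbs) n N s r) :
    (s : ℝ) * |(f.map (Int.castRingHom ℝ)).eval (p.2 : ℝ)| =
      r * |(f.map (Int.castRingHom ℝ)).eval (p.1 : ℝ)| := by
  have h : s * (f.eval p.2).natAbs = r * (f.eval p.1).natAbs := (Finset.mem_filter.1 hp).2
  rw [eval_map_intCastRingHom, eval_map_intCastRingHom, ← Int.cast_abs, ← Int.cast_abs,
    ← Nat.cast_natAbs, ← Nat.cast_natAbs]
  exact_mod_cast h

lemma exists_card_proportionalPairs_le {f : ℤ[X]} (hdeg : 2 ≤ f.natDegree)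
    (hlead : 0 < f.leadingCoeff) (hn : 0 ≤ n)
    (hinj : Set.InjOn (fun a => (f.eval a).natAbs) (Set.Ioi n))
    (hfactor : ∀ s r : ℤ, 0 < r → r < s → ∀ g : MvPolynomial (Fin 2) ℝ,
      Irreducible g → g ∣ Gpoly f s r → 2 ≤ g.totalDegree) :
    ∃ B : ℝ, 0 ≤ B ∧ ∀ N s r : ℕ, 0 < N → 0 < r → r < s →
      ((proportionalPairs (fun a => (f.eval a).natAbs) n N s r).card : ℝ) ≤
        B * ((1 + Real.log N) * √((s : ℝ) / r)) := by
  have hlead' : 0 < (f.map (Int.castRingHom ℝ)).leadingCoeff := by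
    rw [leadingCoeff_map_of_injective Int.cast_injective]
    simpa using hlead
  obtain ⟨K, Y, hK, hY, hpos, hlarge⟩ := exists_card_le_of_mul_eval_eq
    (hdeg.trans_eq (natDegree_map_eq_of_injective Int.cast_injective f).symm) hlead'
  refine ⟨K + Y, by positivity, fun N s r hN hr hrs => ?_⟩
  have hN1 : (1 : ℝ) ≤ N := by exact_mod_cast hN
  set S := proportionalPairs (fun a => (f.eval a).natAbs) n N s r
  have hS : ∀ p ∈ S, n < p.2 ∧ p.2 < p.1 ∧ p.1 ≤ N := fun p hp =>
    lt_and_lt_and_le_of_mem_orderedPairs (Finset.mem_filter.1 hp).1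
  have hsmall : (({p ∈ S | ¬ Y ≤ (p.2 : ℝ)} : Finset (ℤ × ℤ)).card : ℝ) ≤ Y :=
    card_filter_not_le_snd_le (injOn_snd_proportionalPairs hinj hr)
      (fun p hp => hn.trans_lt (hS p hp).1) (by linarith)
  have hbig : (({p ∈ S | Y ≤ (p.2 : ℝ)} : Finset (ℤ × ℤ)).card : ℝ) ≤
      K * ((1 + Real.log N) * √((s : ℝ) / r)) := by
    refine hlarge s r N hN1 (by exact_mod_cast hr) (by exact_mod_cast hrs) ?_ _
      ((injOn_fst_proportionalPairs hinj (hr.trans hrs)).mono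
        (by exact_mod_cast Finset.filter_subset _ S)) fun p hp => ?_
    · exact_mod_cast comp_linear_ne_of_two_le_totalDegree
        (hfactor s r (by exact_mod_cast hr) (by exact_mod_cast hrs))
    · obtain ⟨hp, hpY⟩ := Finset.mem_filter.1 hp
      obtain ⟨-, hlt, hpN⟩ := hS p hp
      have hcurve := mul_abs_eval_eq_of_mem_proportionalPairs hp
      rw [abs_of_pos (hpos _ hpY),
        abs_of_pos (hpos _ (hpY.trans (by exact_mod_cast hlt.le)))] at hcurve
      exact ⟨hpY, hlt, by exact_mod_cast hpN, hcurve⟩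
  rw [← Finset.card_filter_add_card_filter_not (s := S) fun p => Y ≤ (p.2 : ℝ), Nat.cast_add,
    add_mul]
  have hscale : 1 ≤ (1 + Real.log N) * √((s : ℝ) / r) := one_le_mul_of_one_le_of_one_le
    (by linarith [Real.log_nonneg hN1])
    (Real.one_le_sqrt.2 ((one_le_div (by exact_mod_cast hr)).2 (by exact_mod_cast hrs.le)))
  exact add_le_add hbig (hsmall.trans (le_mul_of_one_le_right (by linarith) hscale))

end ProportionalPairs

section GcdSums

lemma sum_Icc_one_div_sqrt_le (n : ℕ) : ∑ r ∈ Finset.Icc 1 n, 1 / √(r : ℝ) ≤ 2 * √(n : ℝ) := by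
  induction n with
  | zero => simp
  | succ n ih =>
    rw [Finset.sum_Icc_succ_top (by omega)]
    have hpos : 0 < √((n + 1 : ℕ) : ℝ) := Real.sqrt_pos.2 (by positivity)
    have hsq : √((n + 1 : ℕ) : ℝ) ^ 2 = √(n : ℝ) ^ 2 + 1 := by
      rw [Real.sq_sqrt (by positivity), Real.sq_sqrt (by positivity), Nat.cast_succ]
    have hstep : 1 / √((n + 1 : ℕ) : ℝ) ≤ 2 * √((n + 1 : ℕ) : ℝ) - 2 * √(n : ℝ) := by
      rw [div_le_iff₀ hpos]
      nlinarith [sq_nonneg (√((n + 1 : ℕ) : ℝ) - √(n : ℝ))]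
    linarith

lemma sum_sum_sqrt_div_sq_le (S : ℕ) :
    ∑ s ∈ Finset.Icc 1 S, ∑ r ∈ Finset.Ico 1 s, √((s : ℝ) / r) / (s : ℝ) ^ 2 ≤
      2 * (1 + Real.log S) := by
  have hinner : ∀ s ∈ Finset.Icc 1 S,
      ∑ r ∈ Finset.Ico 1 s, √((s : ℝ) / r) / (s : ℝ) ^ 2 ≤ 2 * (s : ℝ)⁻¹ := by
    intro s hs
    have hs0 : (0 : ℝ) < s := by exact_mod_cast (Finset.mem_Icc.1 hs).1
    calc ∑ r ∈ Finset.Ico 1 s, √((s : ℝ) / r) / (s : ℝ) ^ 2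
        = √(s : ℝ) / (s : ℝ) ^ 2 * ∑ r ∈ Finset.Ico 1 s, 1 / √(r : ℝ) := by
          rw [Finset.mul_sum]
          refine Finset.sum_congr rfl fun r _ => ?_
          rw [Real.sqrt_div hs0.le]
          ring
      _ ≤ √(s : ℝ) / (s : ℝ) ^ 2 * (2 * √(s : ℝ)) := by
          gcongr
          exact (Finset.sum_le_sum_of_subset_of_nonneg Finset.Ico_subset_Icc_self
            fun r _ _ => by positivity).trans (sum_Icc_one_div_sqrt_le s)
      _ = 2 * √(s : ℝ) ^ 2 / (s : ℝ) ^ 2 := by ring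
      _ = 2 * (s : ℝ)⁻¹ := by
          rw [Real.sq_sqrt hs0.le]
          field_simp
  refine (Finset.sum_le_sum hinner).trans ?_
  rw [← Finset.mul_sum]
  have hharmonic := harmonic_le_one_add_log S
  rw [harmonic_eq_sum_Icc] at hharmonic
  push_cast at hharmonic
  gcongr

lemma exists_reduced_ratio {a b m : ℕ} (hb : 0 < b) (hba : b < a) (hm : 2 ≤ m) :
    ∃ s r : ℕ, 0 < r ∧ r < s ∧ s ≤ a ∧ s * b = r * a ∧
      (a.gcd b : ℝ) ^ m / (a : ℝ) ^ m ≤ 1 / (s : ℝ) ^ 2 := by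
  obtain ⟨s, r, -, hs, hr⟩ := Nat.exists_coprime a b
  have hg : 0 < a.gcd b := Nat.gcd_pos_of_pos_right a hb
  set g := a.gcd b
  have hr0 : 0 < r := Nat.pos_of_mul_pos_right (hr ▸ hb)
  have hrs : r < s := lt_of_mul_lt_mul_right (hs ▸ hr ▸ hba) (Nat.zero_le g)
  refine ⟨s, r, hr0, hrs, hs ▸ Nat.le_mul_of_pos_right s hg, ?_, ?_⟩
  · rw [hs, hr]
    ring
  · have hs1 : (1 : ℝ) ≤ s := by exact_mod_cast hr0.trans hrs
    calc (g : ℝ) ^ m / (a : ℝ) ^ m = 1 / (s : ℝ) ^ m := by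
          rw [hs, Nat.cast_mul, mul_pow, div_mul_cancel_right₀ (by positivity), one_div]
      _ ≤ 1 / (s : ℝ) ^ 2 := by gcongr

variable {u : ℤ → ℕ} {n : ℤ} {N m : ℕ}

lemma gcd_pow_div_pow_le_sum (hm : 2 ≤ m) (hmono : StrictMonoOn u (Set.Ioi n))
    (hpos : ∀ a, n < a → 0 < u a) {p : ℤ × ℤ} (hp : p ∈ orderedPairs n N) :
    ((u p.1).gcd (u p.2) : ℝ) ^ m / (u p.1 : ℝ) ^ m ≤
      ∑ x ∈ (Finset.Icc 1 (u N)).sigma fun s => Finset.Ico 1 s,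
        if x.1 * u p.2 = x.2 * u p.1 then 1 / (x.1 : ℝ) ^ 2 else 0 := by
  obtain ⟨hn, hlt, hN⟩ := lt_and_lt_and_le_of_mem_orderedPairs hp
  have hn1 : n < p.1 := hn.trans hlt
  obtain ⟨s, r, hr, hrs, hsu, heq, hle⟩ := exists_reduced_ratio (hpos _ hn) (hmono hn hn1 hlt) hm
  have hsN : s ≤ u N := hsu.trans (hmono.monotoneOn hn1 (hn1.trans_le hN) hN)
  have hmem : (⟨s, r⟩ : Σ _ : ℕ, ℕ) ∈ (Finset.Icc 1 (u N)).sigma fun s => Finset.Ico 1 s := by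
    simp only [Finset.mem_sigma, Finset.mem_Icc, Finset.mem_Ico]
    omega
  refine hle.trans ?_
  simpa only [if_pos heq] using Finset.single_le_sum (f := fun x : Σ _ : ℕ, ℕ =>
    if x.1 * u p.2 = x.2 * u p.1 then 1 / (x.1 : ℝ) ^ 2 else 0)
    (fun x _ => by positivity) hmem

lemma sum_gcd_pow_div_pow_le {W : ℝ} (hm : 2 ≤ m) (hmono : StrictMonoOn u (Set.Ioi n))
    (hpos : ∀ a, n < a → 0 < u a) (hW : 0 ≤ W)
    (hcard : ∀ s r : ℕ, 0 < r → r < s →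
      ((proportionalPairs u n N s r).card : ℝ) ≤ W * √((s : ℝ) / r)) :
    ∑ p ∈ orderedPairs n N, ((u p.1).gcd (u p.2) : ℝ) ^ m / (u p.1 : ℝ) ^ m ≤
      2 * W * (1 + Real.log (u N)) := by
  set T := (Finset.Icc 1 (u N)).sigma fun s => Finset.Ico 1 s
  calc ∑ p ∈ orderedPairs n N, ((u p.1).gcd (u p.2) : ℝ) ^ m / (u p.1 : ℝ) ^ m
      ≤ ∑ p ∈ orderedPairs n N, ∑ x ∈ T,
          if x.1 * u p.2 = x.2 * u p.1 then 1 / (x.1 : ℝ) ^ 2 else 0 :=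
        Finset.sum_le_sum fun p hp => gcd_pow_div_pow_le_sum hm hmono hpos hp
    _ = ∑ x ∈ T, ((proportionalPairs u n N x.1 x.2).card : ℝ) * (1 / (x.1 : ℝ) ^ 2) := by
        rw [Finset.sum_comm]
        refine Finset.sum_congr rfl fun x _ => ?_
        rw [← Finset.sum_filter, Finset.sum_const, nsmul_eq_mul, proportionalPairs]
    _ ≤ ∑ x ∈ T, W * (√((x.1 : ℝ) / x.2) / (x.1 : ℝ) ^ 2) := by
        refine Finset.sum_le_sum fun x hx => ?_
        obtain ⟨-, hx⟩ := Finset.mem_sigma.1 hx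
        obtain ⟨hr, hrs⟩ := Finset.mem_Ico.1 hx
        calc _ ≤ W * √((x.1 : ℝ) / x.2) * (1 / (x.1 : ℝ) ^ 2) := by
              gcongr
              exact hcard _ _ hr hrs
          _ = _ := by ring
    _ ≤ 2 * W * (1 + Real.log (u N)) := by
        rw [← Finset.mul_sum, Finset.sum_sigma]
        linarith [mul_le_mul_of_nonneg_left (sum_sum_sqrt_div_sq_le (u N)) hW]

lemma SF_pow_eq_sum_orderedPairs {f : ℤ[X]} (hpos : ∀ a, n < a → 0 < (f ^ m).eval a) :
    SF (f ^ m) n N = ∑ p ∈ orderedPairs n N,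
      ((f.eval p.1).natAbs.gcd (f.eval p.2).natAbs : ℝ) ^ m / ((f.eval p.1).natAbs : ℝ) ^ m := by
  rw [SF, ← Finset.sum_finset_product' (orderedPairs n N) _ _ fun _ => mem_orderedPairs]
  refine Finset.sum_congr rfl fun p hp => ?_
  obtain ⟨hn, hlt, -⟩ := lt_and_lt_and_le_of_mem_orderedPairs hp
  have hden : (((f ^ m).eval p.1 : ℤ) : ℝ) = ((f.eval p.1).natAbs : ℝ) ^ m := by
    rw [← abs_of_pos (Int.cast_pos.2 (hpos p.1 (hn.trans hlt))), eval_pow, Int.cast_pow, abs_pow,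
      Nat.cast_natAbs, Int.cast_abs]
  rw [hden, eval_pow, eval_pow, Int.pow_gcd_pow, Nat.cast_pow]
  rfl

end GcdSums

lemma strictMonoOn_natAbs_of_strictMonoOn_pow {v : ℤ → ℤ} {m : ℕ} {S : Set ℤ}
    (hpos : ∀ a ∈ S, 0 < v a ^ m) (hmono : StrictMonoOn (fun a => v a ^ m) S) :
    StrictMonoOn (fun a => (v a).natAbs) S := by
  intro b hb a ha hba
  have habs : |v b| ^ m < |v a| ^ m := by
    rw [← abs_pow, ← abs_pow, abs_of_pos (hpos b hb), abs_of_pos (hpos a ha)]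
    exact hmono hb ha hba
  zify
  exact lt_of_pow_lt_pow_left₀ m (abs_nonneg _) habs

theorem SF_upper_bound_general
    (f : Polynomial ℤ) (hd : 2 ≤ f.natDegree) (hlead : 0 < f.leadingCoeff)
    (m : ℕ) (hm : 2 ≤ m)
    (nF : ℤ) (hnF : 0 < nF)
    (hnFprop : ∀ a b : ℤ, nF < a → 1 ≤ b → b < a →
      (f ^ m).eval b < (f ^ m).eval a ∧ 0 < (f ^ m).eval a)
    (hfactor : ∀ s r : ℤ, 0 < r → r < s →
      ∀ g : MvPolynomial (Fin 2) ℝ, Irreducible g → g ∣ Gpoly f s r → 2 ≤ g.totalDegree) :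
    ∃ C : ℝ, 0 ≤ C ∧ ∀ N : ℕ, 0 < N → SF (f ^ m) nF N ≤ C * (1 + Real.log N) ^ 2 := by
  have hFpos : ∀ a, nF < a → 0 < (f ^ m).eval a := fun a ha =>
    (hnFprop a nF ha (by omega) ha).2
  have hmono : StrictMonoOn (fun a => (f.eval a).natAbs) (Set.Ioi nF) := by
    refine strictMonoOn_natAbs_of_strictMonoOn_pow (m := m) (fun a ha => ?_) fun b hb a ha hba => ?_
    · simpa using hFpos a ha
    · simpa using (hnFprop a b ha (hnF.trans hb) hba).1
  have hpos : ∀ a, nF < a → 0 < (f.eval a).natAbs := fun a ha => Int.natAbs_pos.2 fun h0 =>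
    (hFpos a ha).ne' (by rw [eval_pow, h0, zero_pow (by omega)])
  obtain ⟨B, hB, hcard⟩ := exists_card_proportionalPairs_le hd hlead hnF.le hmono.injOn hfactor
  obtain ⟨A, hA, hlogf⟩ := exists_log_eval_le (f.map (Int.castRingHom ℝ))
  refine ⟨2 * B * (1 + A), by positivity, fun N hN => ?_⟩
  have hN1 : (1 : ℝ) ≤ N := by exact_mod_cast hN
  have hlogN : 0 ≤ Real.log N := Real.log_nonneg hN1
  have hlogu : Real.log (f.eval (N : ℤ)).natAbs ≤ A * (1 + Real.log N) := by
    have := hlogf N hN1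
    rwa [← Int.cast_natCast N, eval_map_intCastRingHom, ← Real.log_abs, ← Int.cast_abs,
      ← Nat.cast_natAbs] at this
  calc SF (f ^ m) nF N ≤ 2 * (B * (1 + Real.log N)) * (1 + Real.log (f.eval (N : ℤ)).natAbs) := by
        rw [SF_pow_eq_sum_orderedPairs hFpos]
        refine sum_gcd_pow_div_pow_le (u := fun a => (f.eval a).natAbs) hm hmono hpos
          (by positivity) fun s r hr hrs => ?_
        rw [mul_assoc]
        exact hcard N s r hN hr hrs
    _ ≤ 2 * (B * (1 + Real.log N)) * ((1 + A) * (1 + Real.log N)) := by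
        gcongr
        linarith
    _ = 2 * B * (1 + A) * (1 + Real.log N) ^ 2 := by ring

theorem SF_upper_bound
    (f : Polynomial ℤ) (hd : 2 ≤ f.natDegree) (hlead : 0 < f.leadingCoeff)
    (hroots : ∃ α β : AlgebraicClosure ℚ, α ≠ β ∧
      Polynomial.aeval α f = 0 ∧ Polynomial.aeval β f = 0)
    (m : ℕ) (hm : 2 ≤ m)
    (nF : ℤ) (hnF : 0 < nF)
    (hnFprop : ∀ a b : ℤ, nF < a → 1 ≤ b → b < a →
      (f ^ m).eval b < (f ^ m).eval a ∧ 0 < (f ^ m).eval a)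
    (δ : ℕ) (hδ : 2 ≤ δ)
    (hδprop : ∀ s r : ℤ, 0 < r → r < s →
      ∀ g : MvPolynomial (Fin 2) ℝ, Irreducible g → g ∣ Gpoly f s r →
        δ ≤ g.totalDegree) :
    ∀ ε : ℝ, 0 < ε → ∃ C : ℝ, ∀ N : ℕ, 0 < N →
      SF (f ^ m) nF N ≤ C * (N : ℝ) ^ ((1 : ℝ) / δ + ε) := by
  intro ε hε
  obtain ⟨A, hA, hSF⟩ := SF_upper_bound_general f hd hlead m hm nF hnF hnFprop
    fun s r hr hrs g hg hgG => hδ.trans (hδprop s r hr hrs g hg hgG)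
  obtain ⟨B, hlog⟩ := exists_one_add_log_sq_le_mul_rpow (by positivity : 0 < (1 : ℝ) / δ + ε)
  refine ⟨A * B, fun N hN => (hSF N hN).trans ?_⟩
  rw [mul_assoc]
  exact mul_le_mul_of_nonneg_left (hlog N (by exact_mod_cast hN)) hA
end

section
/- Let F ∈ ℤ[x] and let (a,h) be a lattice point with a,h positive integers such that F(a) > 0. If (a,h) is invisible along F, then there exist positive integers b and k with b < a such that (b,k) blocks (a,h) from being visible along F and (b,k) is itself visible along F. -/
open Polynomial

/-- A lattice point `(a, h)` (with `a, h` positive integers) is *visible along* `F`. -/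
def VisibleAlong (F : Polynomial ℤ) (a h : ℤ) : Prop :=
  ∃ t : ℚ, (h : ℚ) = t * ((F.eval a : ℤ) : ℚ) ∧
    ∀ u : ℤ, 0 < u → (∃ k : ℤ, 0 < k ∧ (k : ℚ) = t * ((F.eval u : ℤ) : ℚ)) → a ≤ u

/-- The lattice point `(b, k)` *blocks* `(a, h)` from being visible along `F`. -/
def BlocksAlong (F : Polynomial ℤ) (b k a h : ℤ) : Prop :=
  0 < b ∧ 0 < k ∧ b < a ∧
    ∃ t : ℚ, (h : ℚ) = t * ((F.eval a : ℤ) : ℚ) ∧ (k : ℚ) = t * ((F.eval b : ℤ) : ℚ)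

/-!
With `t = h / F a`, the curve `y = t * F x` passes through `(a, h)`. By well-ordering there is a
least positive abscissa at which it has positive integer height, and the point there is visible. If
`(a, h)` is invisible, this abscissa is smaller than `a`, so its point blocks `(a, h)`.
-/

/-- The abscissas of the lattice points with positive coordinates on the curve `y = t * F x`.
Such a point is visible along `F` when its abscissa is the least element of this set. -/
def latticeAbscissas (F : ℤ[X]) (t : ℚ) : Set ℤ :=
  {u | 0 < u ∧ ∃ k : ℤ, 0 < k ∧ (k : ℚ) = t * (F.eval u : ℤ)}

section

variable {F : ℤ[X]} {t : ℚ} {a h b k : ℤ}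

lemma exists_isLeast_latticeAbscissas (hne : (latticeAbscissas F t).Nonempty) :
    ∃ b, IsLeast (latticeAbscissas F t) b :=
  Int.exists_least_of_bdd ⟨0, fun _ hu ↦ hu.1.le⟩ hne

lemma visibleAlong_of_mem_lowerBounds (hk : (k : ℚ) = t * (F.eval b : ℤ))
    (hb : b ∈ lowerBounds (latticeAbscissas F t)) : VisibleAlong F b k :=
  ⟨t, hk, fun _ hu hheight ↦ hb ⟨hu, hheight⟩⟩

lemma exists_blocksAlong_and_visibleAlong (ha : 0 < a) (hh : 0 < h)
    (ht : (h : ℚ) = t * (F.eval a : ℤ)) (hinv : ¬ VisibleAlong F a h) :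
    ∃ b k, BlocksAlong F b k a h ∧ VisibleAlong F b k := by
  have ha_mem : a ∈ latticeAbscissas F t := ⟨ha, h, hh, ht⟩
  obtain ⟨b, hb⟩ := exists_isLeast_latticeAbscissas ⟨a, ha_mem⟩
  obtain ⟨hb_pos, k, hk_pos, hk⟩ := hb.1
  have hb_ne : b ≠ a := by
    rintro rfl
    exact hinv (visibleAlong_of_mem_lowerBounds ht hb.2)
  have hb_lt : b < a := (hb.2 ha_mem).lt_of_ne hb_ne
  exact ⟨b, k, ⟨hb_pos, hk_pos, hb_lt, t, ht, hk⟩, visibleAlong_of_mem_lowerBounds hk hb.2⟩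

end

theorem invisible_has_visible_blocker_general
    (F : ℤ[X]) (a h : ℤ) (ha : 0 < a) (hh : 0 < h)
    (hFa : F.eval a ≠ 0) (hinv : ¬ VisibleAlong F a h) :
    ∃ b k : ℤ, 0 < b ∧ 0 < k ∧ b < a ∧ BlocksAlong F b k a h ∧ VisibleAlong F b k := by
  have ht : (h : ℚ) = h / (F.eval a : ℤ) * (F.eval a : ℤ) :=
    (div_mul_cancel₀ _ (Int.cast_ne_zero.mpr hFa)).symm
  obtain ⟨b, k, hblocks, hvis⟩ := exists_blocksAlong_and_visibleAlong ha hh ht hinv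
  have ⟨hb, hk, hb_lt, _⟩ := hblocks
  exact ⟨b, k, hb, hk, hb_lt, hblocks, hvis⟩

theorem invisible_has_visible_blocker
    (F : Polynomial ℤ) (a h : ℤ) (ha : 0 < a) (hh : 0 < h)
    (hFa : 0 < F.eval a) (hinv : ¬ VisibleAlong F a h) :
    ∃ b k : ℤ, 0 < b ∧ 0 < k ∧ b < a ∧ BlocksAlong F b k a h ∧ VisibleAlong F b k :=
  invisible_has_visible_blocker_general F a h ha hh hFa.ne' hinv
end
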